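/- For every nonnegative integer g, the number of numerical semigroups with multiplicity 5 and genus g is at most the number of numerical semigroups with multiplicity 5 and genus g+1; that is, #S(5,g) ≤ #S(5,g+1). -/

import Mathlib

/-- A numerical semigroup: a subset of ℕ containing 0, closed under addition,
with finite complement. -/
def IsNumericalSemigroup (S : Set ℕ) : Prop :=
  0 ∈ S ∧ (∀ a ∈ S, ∀ b ∈ S, a + b ∈ S) ∧ Sᶜ.Finite

/-- The genus: the number of gaps of `S`. -/
noncomputable def nsGenus (S : Set ℕ) : ℕ := Sᶜ.ncard

/-- The Frobenius number: the largest gap of `S`. -/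
noncomputable def nsFrobenius (S : Set ℕ) : ℕ := sSup Sᶜ

/-- The multiplicity: the least positive element of `S`. -/
noncomputable def nsMultiplicity (S : Set ℕ) : ℕ := sInf {n | n ∈ S ∧ n ≠ 0}

/-- A minimal generator: a nonzero element of `S` that is not a sum of two
nonzero elements of `S`. -/
def IsMinimalGenerator (S : Set ℕ) (n : ℕ) : Prop :=
  n ∈ S ∧ n ≠ 0 ∧ ¬ ∃ a b, a ∈ S ∧ b ∈ S ∧ a ≠ 0 ∧ b ≠ 0 ∧ a + b = n

/-- The embedding dimension: the number of minimal generators of `S`. -/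
noncomputable def nsEmbDim (S : Set ℕ) : ℕ := {n | IsMinimalGenerator S n}.ncard

/-- The number of numerical semigroups with multiplicity `m` and genus `g`. -/
noncomputable def numSgps (m g : ℕ) : ℕ :=
  {S : Set ℕ | IsNumericalSemigroup S ∧ nsMultiplicity S = m ∧ nsGenus S = g}.ncard

/-- The Kunz coordinates `(x₁, x₂, x₃, x₄)` of numerical semigroups of multiplicity `5` and
genus `g`: here `5 * xᵢ + i` is the least element of the semigroup congruent to `i` mod `5`. -/
def kunzFive (g : ℕ) : Set (ℕ × ℕ × ℕ × ℕ) :=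
  {(x₁, x₂, x₃, x₄) | (1 ≤ x₁ ∧ 1 ≤ x₂ ∧ 1 ≤ x₃ ∧ 1 ≤ x₄) ∧
    (x₂ ≤ 2 * x₁ ∧ x₃ ≤ x₁ + x₂ ∧ x₄ ≤ x₁ + x₃ ∧ x₄ ≤ 2 * x₂) ∧
    (x₁ ≤ x₂ + x₄ + 1 ∧ x₁ ≤ 2 * x₃ + 1 ∧ x₂ ≤ x₃ + x₄ + 1 ∧ x₃ ≤ 2 * x₄ + 1) ∧
    x₁ + x₂ + x₃ + x₄ = g}

/-- The set of naturals with prescribed Kunz coordinates modulo `5`. -/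
def kunzSet : ℕ × ℕ × ℕ × ℕ → Set ℕ
  | (x₁, x₂, x₃, x₄) => {n | (n % 5 = 1 → x₁ ≤ n / 5) ∧ (n % 5 = 2 → x₂ ≤ n / 5) ∧
      (n % 5 = 3 → x₃ ≤ n / 5) ∧ (n % 5 = 4 → x₄ ≤ n / 5)}

theorem mem_kunzFive {g x₁ x₂ x₃ x₄ : ℕ} : (x₁, x₂, x₃, x₄) ∈ kunzFive g ↔
    (1 ≤ x₁ ∧ 1 ≤ x₂ ∧ 1 ≤ x₃ ∧ 1 ≤ x₄) ∧
    (x₂ ≤ 2 * x₁ ∧ x₃ ≤ x₁ + x₂ ∧ x₄ ≤ x₁ + x₃ ∧ x₄ ≤ 2 * x₂) ∧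
    (x₁ ≤ x₂ + x₄ + 1 ∧ x₁ ≤ 2 * x₃ + 1 ∧ x₂ ≤ x₃ + x₄ + 1 ∧ x₃ ≤ 2 * x₄ + 1) ∧
    x₁ + x₂ + x₃ + x₄ = g := Iff.rfl

theorem mem_kunzSet {n x₁ x₂ x₃ x₄ : ℕ} : n ∈ kunzSet (x₁, x₂, x₃, x₄) ↔
    (n % 5 = 1 → x₁ ≤ n / 5) ∧ (n % 5 = 2 → x₂ ≤ n / 5) ∧
      (n % 5 = 3 → x₃ ≤ n / 5) ∧ (n % 5 = 4 → x₄ ≤ n / 5) := Iff.rfl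

theorem kunzFive_finite (g : ℕ) : (kunzFive g).Finite := by
  refine (Set.finite_Iic ((g, g, g, g) : ℕ × ℕ × ℕ × ℕ)).subset ?_
  rintro ⟨x₁, x₂, x₃, x₄⟩ h
  rw [mem_kunzFive] at h
  simp only [Set.mem_Iic, Prod.mk_le_mk]
  omega

theorem five_mul_add_mem_kunzSet (q x₁ x₂ x₃ x₄ : ℕ) :
    (5 * q + 1 ∈ kunzSet (x₁, x₂, x₃, x₄) ↔ x₁ ≤ q) ∧
    (5 * q + 2 ∈ kunzSet (x₁, x₂, x₃, x₄) ↔ x₂ ≤ q) ∧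
    (5 * q + 3 ∈ kunzSet (x₁, x₂, x₃, x₄) ↔ x₃ ≤ q) ∧
    (5 * q + 4 ∈ kunzSet (x₁, x₂, x₃, x₄) ↔ x₄ ≤ q) := by
  simp only [mem_kunzSet]
  refine ⟨?_, ?_, ?_, ?_⟩ <;> omega

theorem kunzSet_injective : Function.Injective kunzSet := by
  rintro ⟨x₁, x₂, x₃, x₄⟩ ⟨y₁, y₂, y₃, y₄⟩ h
  have hx (q : ℕ) := five_mul_add_mem_kunzSet q x₁ x₂ x₃ x₄
  have hy (q : ℕ) := five_mul_add_mem_kunzSet q y₁ y₂ y₃ y₄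
  rw [h] at hx
  have h₁ : x₁ = y₁ := eq_of_forall_ge_iff fun q => (hx q).1.symm.trans (hy q).1
  have h₂ : x₂ = y₂ := eq_of_forall_ge_iff fun q => (hx q).2.1.symm.trans (hy q).2.1
  have h₃ : x₃ = y₃ := eq_of_forall_ge_iff fun q => (hx q).2.2.1.symm.trans (hy q).2.2.1
  have h₄ : x₄ = y₄ := eq_of_forall_ge_iff fun q => (hx q).2.2.2.symm.trans (hy q).2.2.2
  rw [h₁, h₂, h₃, h₄]

/-- The gaps of `kunzSet`, as a finset. -/
def kunzGaps (x₁ x₂ x₃ x₄ : ℕ) : Finset ℕ :=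
  (Finset.range x₁).image (5 * · + 1) ∪ (Finset.range x₂).image (5 * · + 2) ∪
    (Finset.range x₃).image (5 * · + 3) ∪ (Finset.range x₄).image (5 * · + 4)

theorem compl_kunzSet (x₁ x₂ x₃ x₄ : ℕ) :
    (kunzSet (x₁, x₂, x₃, x₄))ᶜ = kunzGaps x₁ x₂ x₃ x₄ := by
  ext n
  simp only [Set.mem_compl_iff, mem_kunzSet, kunzGaps, Finset.coe_union, Finset.coe_image,
    Finset.coe_range, Set.mem_union, Set.mem_image, Set.mem_Iio]
  constructor
  · intro h
    have : (n % 5 = 1 ∧ n / 5 < x₁) ∨ (n % 5 = 2 ∧ n / 5 < x₂) ∨ (n % 5 = 3 ∧ n / 5 < x₃) ∨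
      (n % 5 = 4 ∧ n / 5 < x₄) := by omega
    rcases this with h | h | h | h
    · exact .inl (.inl (.inl ⟨n / 5, h.2, by omega⟩))
    · exact .inl (.inl (.inr ⟨n / 5, h.2, by omega⟩))
    · exact .inl (.inr ⟨n / 5, h.2, by omega⟩)
    · exact .inr ⟨n / 5, h.2, by omega⟩
  · rintro (((⟨q, hq, rfl⟩ | ⟨q, hq, rfl⟩) | ⟨q, hq, rfl⟩) | ⟨q, hq, rfl⟩) <;> omega

theorem card_kunzGaps (x₁ x₂ x₃ x₄ : ℕ) :
    (kunzGaps x₁ x₂ x₃ x₄).card = x₁ + x₂ + x₃ + x₄ := by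
  have inj (i : ℕ) : Function.Injective (5 * · + i) := fun a b h => by
    simp only at h; omega
  rw [kunzGaps, Finset.card_union_of_disjoint, Finset.card_union_of_disjoint,
    Finset.card_union_of_disjoint]
  · simp only [Finset.card_image_of_injective _ (inj _), Finset.card_range]
  all_goals
    rw [Finset.disjoint_left]
    intro n
    simp only [Finset.mem_union, Finset.mem_image, Finset.mem_range]
    grind

theorem nsGenus_kunzSet (x₁ x₂ x₃ x₄ : ℕ) :
    nsGenus (kunzSet (x₁, x₂, x₃, x₄)) = x₁ + x₂ + x₃ + x₄ := by
  rw [nsGenus, compl_kunzSet, Set.ncard_coe_finset, card_kunzGaps]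

theorem isNumericalSemigroup_kunzSet {g : ℕ} {x : ℕ × ℕ × ℕ × ℕ} (hx : x ∈ kunzFive g) :
    IsNumericalSemigroup (kunzSet x) := by
  obtain ⟨x₁, x₂, x₃, x₄⟩ := x
  rw [mem_kunzFive] at hx
  refine ⟨by simp [mem_kunzSet], fun a ha b hb => ?_, ?_⟩
  · rw [mem_kunzSet] at ha hb ⊢
    have ha5 : a % 5 < 5 := Nat.mod_lt _ (by norm_num)
    have hb5 : b % 5 < 5 := Nat.mod_lt _ (by norm_num)
    have hm := Nat.add_mod a b 5
    have hd : (a + b) / 5 = a / 5 + b / 5 + (a % 5 + b % 5) / 5 := by omega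
    rw [hm, hd]
    generalize a % 5 = r at *
    generalize b % 5 = s at *
    interval_cases r <;> interval_cases s <;> norm_num at ha hb ⊢ <;> omega
  · rw [compl_kunzSet]
    exact Finset.finite_toSet _

theorem nsMultiplicity_kunzSet {g : ℕ} {x : ℕ × ℕ × ℕ × ℕ} (hx : x ∈ kunzFive g) :
    nsMultiplicity (kunzSet x) = 5 := by
  obtain ⟨x₁, x₂, x₃, x₄⟩ := x
  rw [mem_kunzFive] at hx
  refine IsLeast.csInf_eq ⟨⟨by simp [mem_kunzSet], by norm_num⟩, ?_⟩
  rintro n ⟨hn, hn0⟩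
  rw [mem_kunzSet] at hn
  omega

theorem exists_forall_mul_add_mem_iff {S : Set ℕ} (hS : IsNumericalSemigroup S) {m : ℕ}
    (hm : m ∈ S) (hm0 : m ≠ 0) (i : ℕ) : ∃ k, ∀ q, m * q + i ∈ S ↔ k ≤ q := by
  classical
  obtain ⟨-, hadd, hfin⟩ := hS
  have hex : ∃ q, m * q + i ∈ S := by
    by_contra! h
    have hinj : Function.Injective (m * · + i) := fun a b hab =>
      Nat.eq_of_mul_eq_mul_left (Nat.pos_of_ne_zero hm0) (Nat.add_right_cancel hab)
    exact Set.infinite_of_injective_forall_mem hinj h hfin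
  refine ⟨Nat.find hex, fun q => ⟨Nat.find_min' hex, fun hq => ?_⟩⟩
  induction q, hq using Nat.le_induction with
  | base => exact Nat.find_spec hex
  | succ q _ ih =>
    have := hadd _ ih _ hm
    rwa [show m * q + i + m = m * (q + 1) + i by ring] at this

theorem exists_kunzSet_eq {S : Set ℕ} (hS : IsNumericalSemigroup S) (hm : nsMultiplicity S = 5) :
    ∃ x ∈ kunzFive (nsGenus S), kunzSet x = S := by
  have h5 : 5 ∈ S := by
    have hne : {n | n ∈ S ∧ n ≠ 0}.Nonempty :=
      Nat.nonempty_of_sInf_eq_succ (k := 4) hm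
    have := (Nat.sInf_mem hne).1
    rwa [show sInf {n | n ∈ S ∧ n ≠ 0} = 5 from hm] at this
  have hlt (n : ℕ) (h0 : n ≠ 0) (h : n < 5) : n ∉ S := fun hn =>
    Nat.notMem_of_lt_sInf (s := {n | n ∈ S ∧ n ≠ 0})
      (h.trans_eq (show sInf {n | n ∈ S ∧ n ≠ 0} = 5 from hm).symm) ⟨hn, h0⟩
  have hk := exists_forall_mul_add_mem_iff hS h5 (by norm_num)
  obtain ⟨x₀, h₀⟩ := hk 0
  obtain ⟨x₁, h₁⟩ := hk 1
  obtain ⟨x₂, h₂⟩ := hk 2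
  obtain ⟨x₃, h₃⟩ := hk 3
  obtain ⟨x₄, h₄⟩ := hk 4
  have hz : x₀ = 0 := Nat.le_zero.mp ((h₀ 0).mp hS.1)
  have hSx : kunzSet (x₁, x₂, x₃, x₄) = S := by
    ext n
    rw [mem_kunzSet]
    have hn := Nat.div_add_mod n 5
    have hr : n % 5 < 5 := Nat.mod_lt _ (by norm_num)
    generalize n / 5 = q at *
    generalize n % 5 = r at *
    subst hn
    interval_cases r <;> simp [h₁, h₂, h₃, h₄]
    simpa [hz] using h₀ q
  have hadd {a b : ℕ} (ha : a ∈ S) (hb : b ∈ S) : a + b ∈ S := hS.2.1 a ha b hb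
  have m₁ := (h₁ x₁).mpr le_rfl
  have m₂ := (h₂ x₂).mpr le_rfl
  have m₃ := (h₃ x₃).mpr le_rfl
  have m₄ := (h₄ x₄).mpr le_rfl
  have pos {i x : ℕ} (h : ∀ q, 5 * q + i ∈ S ↔ x ≤ q) (hi : i ≠ 0) (hi5 : i < 5) : 1 ≤ x := by
    by_contra hx
    exact hlt i hi hi5 (by simpa using (h 0).mpr (by omega))
  refine ⟨(x₁, x₂, x₃, x₄), mem_kunzFive.mpr ⟨⟨pos h₁ (by norm_num) (by norm_num),
    pos h₂ (by norm_num) (by norm_num), pos h₃ (by norm_num) (by norm_num),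
    pos h₄ (by norm_num) (by norm_num)⟩, ⟨?_, ?_, ?_, ?_⟩, ⟨?_, ?_, ?_, ?_⟩, ?_⟩, hSx⟩
  · exact (h₂ _).mp (by convert hadd m₁ m₁ using 1; ring)
  · exact (h₃ _).mp (by convert hadd m₁ m₂ using 1; ring)
  · exact (h₄ _).mp (by convert hadd m₁ m₃ using 1; ring)
  · exact (h₄ _).mp (by convert hadd m₂ m₂ using 1; ring)
  · exact (h₁ _).mp (by convert hadd m₂ m₄ using 1; ring)
  · exact (h₁ _).mp (by convert hadd m₃ m₃ using 1; ring)
  · exact (h₂ _).mp (by convert hadd m₃ m₄ using 1; ring)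
  · exact (h₃ _).mp (by convert hadd m₄ m₄ using 1; ring)
  · rw [← hSx, nsGenus_kunzSet]

theorem numSgps_five (g : ℕ) : numSgps 5 g = (kunzFive g).ncard := by
  rw [numSgps, ← Set.ncard_image_of_injective _ kunzSet_injective]
  congr 1
  ext S
  constructor
  · rintro ⟨hS, hm, rfl⟩
    exact exists_kunzSet_eq hS hm
  · rintro ⟨x, hx, rfl⟩
    refine ⟨isNumericalSemigroup_kunzSet hx, nsMultiplicity_kunzSet hx, ?_⟩
    obtain ⟨x₁, x₂, x₃, x₄⟩ := x
    rw [nsGenus_kunzSet]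
    exact (mem_kunzFive.mp hx).2.2.2

/-- An injection from Kunz coordinates of genus `g` to those of genus `g + 1`. It raises `x₄` when
this is possible; otherwise `x₄` lies on one of the facets `x₄ = x₁ + x₃`, `x₄ = 2 * x₂`, which are
moved by an automorphism of `ZMod 5` to facets whose points cannot have their `x₄` lowered. -/
def kunzStep : ℕ × ℕ × ℕ × ℕ → ℕ × ℕ × ℕ × ℕ
  | (x₁, x₂, x₃, x₄) =>
    if x₄ < 2 * x₂ then
      if x₄ < x₁ + x₃ then (x₁, x₂, x₃, x₄ + 1) else (x₂, x₁ + x₃ + 1, x₁, x₃)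
    else if x₄ = x₁ + x₃ then (x₃ + 1, x₁, 2 * x₂, x₂)
    else if x₁ ≤ 2 * x₃ then (x₃, x₁, 2 * x₂ + 1, x₂)
    else (x₃ + 2, 2 * x₃, 2 * x₂, x₂)

theorem kunzStep_mapsTo (g : ℕ) : Set.MapsTo kunzStep (kunzFive g) (kunzFive (g + 1)) := by
  rintro ⟨x₁, x₂, x₃, x₄⟩ hx
  rw [mem_kunzFive] at hx
  simp only [kunzStep]
  split_ifs <;> rw [mem_kunzFive] <;> omega

theorem kunzStep_injOn (g : ℕ) : Set.InjOn kunzStep (kunzFive g) := by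
  rintro ⟨x₁, x₂, x₃, x₄⟩ hx ⟨y₁, y₂, y₃, y₄⟩ hy h
  rw [mem_kunzFive] at hx hy
  simp only [kunzStep] at h
  simp only [Prod.mk.injEq]
  split_ifs at h <;> simp only [Prod.mk.injEq] at h <;> omega

/-- `#S(5,g) ≤ #S(5,g+1)` for every nonnegative integer `g`. -/
theorem statement19 (g : ℕ) : numSgps 5 g ≤ numSgps 5 (g + 1) := by
  rw [numSgps_five, numSgps_five]
  exact Set.ncard_le_ncard_of_injOn kunzStep (kunzStep_mapsTo g) (kunzStep_injOn g)
    (kunzFive_finite (g + 1))
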